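/- If for every multi-index α ∈ {0,1}^d there is a constant c_1 with a(v_α, v_α) ≤ c_1 ⟨L_α v_α, v_α⟩ for all v_α ∈ S_α, then the additive subspace correction smoother L = Σ_{α∈{0,1}^d} Q_α′ L_α Q_α satisfies a(v,v) ≤ c ⟨Lv, v⟩ for all v ∈ S^d, where c depends only on c_1 and d but not on the mesh size h or the spline degree p. -/

import Mathlib

noncomputable section

open MeasureTheory Set

namespace SplineMG

/-- The `j`-th piece of the uniform partition of `[0,1]` into `m` subintervals of
length `h = 1/m`; the first and last pieces are extended to `-∞` resp. `+∞`
(the spline is extended polynomially outside `[0,1]`). -/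
def pieceSet (m j : ℕ) : Set ℝ :=
  (if j = 0 then Iic ((1 : ℝ) / m) else Icc ((j : ℝ) / m) (((j : ℝ) + 1) / m)) ∪
  (if j = m - 1 then Ici (((m : ℝ) - 1) / m) else ∅)

/-- `u : ℝ → ℝ` belongs to the univariate spline space `S` of degree `p` and maximal
smoothness `C^{p-1}` on the uniform partition of `(0,1)` into `m` intervals of
length `h = 1/m`. -/
def IsSpline (m p : ℕ) (u : ℝ → ℝ) : Prop :=
  ContDiffOn ℝ (p - 1 : ℕ) u (Ioo (0 : ℝ) 1) ∧
  ∀ j < m, ∃ q : Polynomial ℝ, q.natDegree ≤ p ∧ ∀ x ∈ pieceSet m j, u x = q.eval x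

/-- `u` belongs to the subspace `S₀` of `S`: all odd derivatives of order `< p`
vanish at both endpoints. -/
def IsSpline0 (m p : ℕ) (u : ℝ → ℝ) : Prop :=
  IsSpline m p u ∧
  ∀ l : ℕ, 2 * l + 1 < p →
    iteratedDeriv (2 * l + 1) u 0 = 0 ∧ iteratedDeriv (2 * l + 1) u 1 = 0

/-- The `L²(0,1)` inner product. -/
def ip0 (u v : ℝ → ℝ) : ℝ := ∫ x in Ioo (0 : ℝ) 1, u x * v x

/-- The squared `L²(0,1)` norm `‖u‖₀²`. -/
def l2normSq (u : ℝ → ℝ) : ℝ := ∫ x in Ioo (0 : ℝ) 1, u x ^ 2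

/-- The `L²(0,1)` norm `‖u‖₀`. -/
def l2norm (u : ℝ → ℝ) : ℝ := Real.sqrt (l2normSq u)

/-- The squared `H¹(0,1)` seminorm `|u|₁²`. -/
def h1semiSq (u : ℝ → ℝ) : ℝ := ∫ x in Ioo (0 : ℝ) 1, deriv u x ^ 2

/-- The `H¹(0,1)` seminorm `|u|₁`. -/
def h1semi (u : ℝ → ℝ) : ℝ := Real.sqrt (h1semiSq u)

/-- The squared full `H¹(0,1)` norm. -/
def h1normSq (u : ℝ → ℝ) : ℝ := l2normSq u + h1semiSq u

/-- `u` belongs to `S₁`, the `L²(0,1)`-orthogonal complement of `S₀` in `S`. -/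
def IsSpline1 (m p : ℕ) (u : ℝ → ℝ) : Prop :=
  IsSpline m p u ∧ ∀ v, IsSpline0 m p v → ip0 u v = 0

/-- `v = Q₀ u` is the `L²(0,1)`-orthogonal projection of `u` onto `S₀`. -/
def IsL2Proj0 (m p : ℕ) (u v : ℝ → ℝ) : Prop :=
  IsSpline0 m p v ∧ ∀ w, IsSpline0 m p w → ip0 (u - v) w = 0

/-- The component predicate: `false ↦ S₀`, `true ↦ S₁`. -/
def IsSplineC (m p : ℕ) : Bool → (ℝ → ℝ) → Prop
  | false => IsSpline0 m p
  | true => IsSpline1 m p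

/-- The tensor-product spline space `S^d = S ⊗ ⋯ ⊗ S` on `(0,1)^d`. -/
def TensorSpline (d m p : ℕ) : Submodule ℝ ((Fin d → ℝ) → ℝ) :=
  Submodule.span ℝ {u | ∃ f : Fin d → ℝ → ℝ, (∀ i, IsSpline m p (f i)) ∧
    u = fun x => ∏ i, f i (x i)}

/-- The subspace `S_α = S_{α₁} ⊗ ⋯ ⊗ S_{α_d}` of `S^d`, for `α ∈ {0,1}^d`
(`false ↦ 0`, `true ↦ 1`). -/
def TensorSplineSub (d m p : ℕ) (α : Fin d → Bool) : Submodule ℝ ((Fin d → ℝ) → ℝ) :=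
  Submodule.span ℝ {u | ∃ f : Fin d → ℝ → ℝ, (∀ i, IsSplineC m p (α i) (f i)) ∧
    u = fun x => ∏ i, f i (x i)}

/-- The open unit cube `Ω = (0,1)^d`. -/
def cube (d : ℕ) : Set (Fin d → ℝ) := Set.univ.pi fun _ => Ioo (0 : ℝ) 1

/-- The `i`-th partial derivative. -/
def pd (d : ℕ) (i : Fin d) (u : (Fin d → ℝ) → ℝ) : (Fin d → ℝ) → ℝ :=
  fun x => deriv (fun t => u (Function.update x i t)) (x i)

/-- The `L²(Ω)` inner product on the unit cube. -/
def ipd (d : ℕ) (u v : (Fin d → ℝ) → ℝ) : ℝ := ∫ x in cube d, u x * v x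

/-- The squared `L²(Ω)` norm. -/
def l2normSqD (d : ℕ) (u : (Fin d → ℝ) → ℝ) : ℝ := ∫ x in cube d, u x ^ 2

/-- The bilinear form `a(u,v) = ∫_Ω (∇u·∇v + uv) dx`. -/
def aForm (d : ℕ) (u v : (Fin d → ℝ) → ℝ) : ℝ :=
  ∫ x in cube d, (∑ i, pd d i u x * pd d i v x) + u x * v x

/-- The squared `H¹(Ω)` seminorm. -/
def h1semiSqD (d : ℕ) (u : (Fin d → ℝ) → ℝ) : ℝ :=
  ∫ x in cube d, ∑ i, pd d i u x ^ 2

/-- The squared full `H¹(Ω)` norm. -/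
def h1normSqD (d : ℕ) (u : (Fin d → ℝ) → ℝ) : ℝ := l2normSqD d u + h1semiSqD d u

/-- `v = Q_α u` is the `L²(Ω)`-orthogonal projection of `u` onto `S_α`. -/
def IsL2ProjSub (d m p : ℕ) (α : Fin d → Bool) (u v : (Fin d → ℝ) → ℝ) : Prop :=
  v ∈ TensorSplineSub d m p α ∧ ∀ w ∈ TensorSplineSub d m p α, ipd d (u - v) w = 0

/-- The coarse tensor-product spline space `(S_c)^d` (with `m/2` knot spans of
width `2h` per direction). -/
def TensorSplineCoarse (d m p : ℕ) : Submodule ℝ ((Fin d → ℝ) → ℝ) :=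
  TensorSpline d (m / 2) p

/-- `v = T_c u` is the `a(·,·)`-orthogonal (Galerkin) projection of `u` onto `(S_c)^d`. -/
def IsGalerkinCoarseProj (d m p : ℕ) (u v : (Fin d → ℝ) → ℝ) : Prop :=
  v ∈ TensorSplineCoarse d m p ∧ ∀ w ∈ TensorSplineCoarse d m p, aForm d (u - v) w = 0

end SplineMG

namespace SplineMG

/-- knots -/
def knots (m : ℕ) : Set ℝ := {x | ∃ j : ℕ, j ≤ m ∧ x = (j : ℝ) / m}

lemma knots_finite (m : ℕ) : (knots m).Finite := by
  refine ((Set.finite_Iic m).image (fun j : ℕ => (j : ℝ) / m)).subset ?_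
  rintro x ⟨j, hj, rfl⟩
  exact ⟨j, hj, rfl⟩

lemma piece_closed (m j : ℕ) : IsClosed (pieceSet m j) := by
  unfold pieceSet
  apply IsClosed.union
  · split_ifs
    · exact isClosed_Iic
    · exact isClosed_Icc
  · split_ifs
    · exact isClosed_Ici
    · exact isClosed_empty

lemma piece_cover (m : ℕ) (hm : 1 ≤ m) (x : ℝ) : ∃ j < m, x ∈ pieceSet m j := by
  have hm' : (0 : ℝ) < m := by exact_mod_cast hm
  by_cases h0 : x ≤ 1 / m
  · exact ⟨0, hm, Or.inl (by simpa using h0)⟩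
  by_cases h1 : ((m : ℝ) - 1) / m ≤ x
  · refine ⟨m - 1, by omega, Or.inr ?_⟩
    rw [if_pos rfl]; exact h1
  push Not at h0 h1
  have hx : 0 < x := lt_trans (by positivity) h0
  refine ⟨⌊x * m⌋₊, ?_, Or.inl ?_⟩
  · rw [Nat.floor_lt (by positivity)]
    rw [lt_div_iff₀ hm'] at h1
    linarith
  · have hne : ⌊x * m⌋₊ ≠ 0 := by
      rw [div_lt_iff₀ hm'] at h0
      have : 0 < ⌊x * m⌋₊ := Nat.floor_pos.2 h0.le
      omega
    rw [if_neg hne]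
    constructor
    · rw [div_le_iff₀ hm']; exact Nat.floor_le (by positivity)
    · rw [le_div_iff₀ hm']; exact (Nat.lt_floor_add_one _).le

lemma piece_nhds (m j : ℕ) (hm : 1 ≤ m) (hj : j < m) (x : ℝ) (hx : x ∈ pieceSet m j)
    (hk : x ∉ knots m) : pieceSet m j ∈ nhds x := by
  have hne : ∀ k : ℕ, k ≤ m → x ≠ (k : ℝ) / m := fun k hk' h => hk ⟨k, hk', h⟩
  rcases hx with hx | hx
  · refine Filter.mem_of_superset ?_ subset_union_left
    split_ifs at hx ⊢ with h
    · refine Iic_mem_nhds (lt_of_le_of_ne hx ?_)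
      simpa using hne 1 hm
    · refine Icc_mem_nhds (lt_of_le_of_ne hx.1 (hne j hj.le).symm) (lt_of_le_of_ne hx.2 ?_)
      simpa using hne (j+1) hj
  · refine Filter.mem_of_superset ?_ subset_union_right
    split_ifs at hx ⊢ with h
    · refine Ici_mem_nhds (lt_of_le_of_ne hx (Ne.symm ?_))
      have := hne (m-1) (by omega)
      rwa [Nat.cast_sub hm, Nat.cast_one] at this
    · exact hx.elim

lemma piece_nhds_zero (m : ℕ) (hm : 1 ≤ m) : pieceSet m 0 ∈ nhds (0:ℝ) := by
  have hm' : (0 : ℝ) < m := by exact_mod_cast hm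
  refine Filter.mem_of_superset ?_ subset_union_left
  rw [if_pos rfl]
  exact Iic_mem_nhds (by positivity)

lemma piece_nhds_one (m : ℕ) (hm : 1 ≤ m) : pieceSet m (m-1) ∈ nhds (1:ℝ) := by
  have hm' : (0 : ℝ) < m := by exact_mod_cast hm
  refine Filter.mem_of_superset ?_ subset_union_right
  rw [if_pos rfl]
  refine Ici_mem_nhds ?_
  rw [div_lt_one hm']; linarith

lemma IsSpline.continuous {m p : ℕ} (hm : 1 ≤ m) {u : ℝ → ℝ} (hu : IsSpline m p u) :
    Continuous u := by
  have hfin : LocallyFinite (fun j : Fin m => pieceSet m j) := locallyFinite_of_finite _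
  refine hfin.continuous ?_ (fun j => piece_closed m j) ?_
  · refine Set.eq_univ_of_forall fun x => ?_
    obtain ⟨j, hj, hx⟩ := piece_cover m hm x
    exact Set.mem_iUnion.2 ⟨⟨j, hj⟩, hx⟩
  · intro j
    obtain ⟨q, -, hq⟩ := hu.2 j j.2
    exact q.continuous.continuousOn.congr hq

lemma IsSpline.add {m p : ℕ} {u v : ℝ → ℝ} (hu : IsSpline m p u) (hv : IsSpline m p v) :
    IsSpline m p (u + v) := by
  refine ⟨hu.1.add hv.1, fun j hj => ?_⟩
  obtain ⟨q, hq, h⟩ := hu.2 j hj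
  obtain ⟨r, hr, h'⟩ := hv.2 j hj
  refine ⟨q + r, Polynomial.natDegree_add_le_of_degree_le hq hr, fun x hx => ?_⟩
  simp [h x hx, h' x hx]

lemma IsSpline.smul {m p : ℕ} {u : ℝ → ℝ} (c : ℝ) (hu : IsSpline m p u) :
    IsSpline m p (c • u) := by
  refine ⟨contDiffOn_const.smul hu.1, fun j hj => ?_⟩
  obtain ⟨q, hq, h⟩ := hu.2 j hj
  refine ⟨c • q, (Polynomial.natDegree_smul_le _ _).trans hq, fun x hx => ?_⟩
  simp [h x hx]

lemma IsSpline.zero {m p : ℕ} : IsSpline m p 0 := by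
  refine ⟨contDiffOn_const, fun j hj => ⟨0, by simp, by simp⟩⟩

lemma IsSpline.contDiffAt {m p j : ℕ} (hj : j < m) {u : ℝ → ℝ} (hu : IsSpline m p u) {x : ℝ}
    (hx : pieceSet m j ∈ nhds x) (n : ℕ) : ContDiffAt ℝ n u x := by
  obtain ⟨q, -, h⟩ := hu.2 j hj
  have : u =ᶠ[nhds x] fun y => q.eval y := by
    filter_upwards [hx] with y hy using h y hy
  exact (q.contDiff_aeval (𝕜 := ℝ) n).contDiffAt.congr_of_eventuallyEq this

/-- S₀ as a submodule -/
def S0 (m p : ℕ) (hm : 1 ≤ m) : Submodule ℝ (ℝ → ℝ) where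
  carrier := {u | IsSpline0 m p u}
  zero_mem' := ⟨IsSpline.zero, fun l _ => by
    have : ∀ x, iteratedDeriv (2 * l + 1) (0 : ℝ → ℝ) x = 0 := by
      intro x
      have := iteratedDeriv_const_smul_field (n := 2 * l + 1) (x := x) (0:ℝ) (0 : ℝ → ℝ)
      simpa using this
    exact ⟨this 0, this 1⟩⟩
  add_mem' := by
    intro u v hu hv
    refine ⟨hu.1.add hv.1, fun l hl => ⟨?_, ?_⟩⟩
    · rw [iteratedDeriv_add (hu.1.contDiffAt hm (piece_nhds_zero m hm) _)
        (hv.1.contDiffAt hm (piece_nhds_zero m hm) _), (hu.2 l hl).1, (hv.2 l hl).1, add_zero]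
    · rw [iteratedDeriv_add (hu.1.contDiffAt (by omega) (piece_nhds_one m hm) _)
        (hv.1.contDiffAt (by omega) (piece_nhds_one m hm) _), (hu.2 l hl).2, (hv.2 l hl).2, add_zero]
  smul_mem' := by
    intro c u hu
    refine ⟨hu.1.smul c, fun l hl => ⟨?_, ?_⟩⟩
    · rw [iteratedDeriv_const_smul_field, (hu.2 l hl).1, smul_zero]
    · rw [iteratedDeriv_const_smul_field, (hu.2 l hl).2, smul_zero]

open Classical in
/-- index of a piece containing `x` -/
def pidx (m : ℕ) (hm : 1 ≤ m) (x : ℝ) : Fin m :=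
  ⟨(piece_cover m hm x).choose, (piece_cover m hm x).choose_spec.1⟩

lemma pidx_mem (m : ℕ) (hm : 1 ≤ m) (x : ℝ) : x ∈ pieceSet m (pidx m hm x) :=
  (piece_cover m hm x).choose_spec.2

/-- gluing map -/
def glue (m p : ℕ) (hm : 1 ≤ m) :
    (Fin m → Polynomial.degreeLT ℝ (p+1)) →ₗ[ℝ] (ℝ → ℝ) where
  toFun q := fun x => (q (pidx m hm x) : Polynomial ℝ).eval x
  map_add' := by intro a b; ext x; simp
  map_smul' := by intro a b; ext x; simp

lemma S0_le (m p : ℕ) (hm : 1 ≤ m) : S0 m p hm ≤ LinearMap.range (glue m p hm) := by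
  intro u hu
  have := hu.1.2
  choose q hq h using this
  refine ⟨fun j => ⟨q j j.2, ?_⟩, ?_⟩
  · rw [Polynomial.mem_degreeLT]
    refine (Polynomial.degree_le_natDegree).trans_lt ?_
    exact_mod_cast Nat.lt_succ_of_le (hq j j.2)
  · ext x
    exact (h _ _ x (pidx_mem m hm x)).symm

instance S0_fd (m p : ℕ) (hm : 1 ≤ m) : FiniteDimensional ℝ (S0 m p hm) := by
  have : FiniteDimensional ℝ (Polynomial.degreeLT ℝ (p+1)) :=
    (Polynomial.degreeLTEquiv ℝ (p+1)).symm.finiteDimensional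
  exact Submodule.finiteDimensional_of_le (S0_le m p hm)

lemma int1 {f g : ℝ → ℝ} (hf : Continuous f) (hg : Continuous g) :
    IntegrableOn (fun x => f x * g x) (Ioo (0:ℝ) 1) :=
  ((hf.mul hg).continuousOn.integrableOn_compact isCompact_Icc).mono_set Ioo_subset_Icc_self

lemma ip0_add {f g w : ℝ → ℝ} (hf : Continuous f) (hg : Continuous g) (hw : Continuous w) :
    ip0 (f + g) w = ip0 f w + ip0 g w := by
  unfold ip0
  rw [← integral_add (int1 hf hw) (int1 hg hw)]
  simp [add_mul]

lemma ip0_smul (c : ℝ) (f w : ℝ → ℝ) : ip0 (c • f) w = c * ip0 f w := by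
  unfold ip0
  rw [← integral_const_mul]
  simp [mul_assoc]

lemma ip0_comm (f w : ℝ → ℝ) : ip0 f w = ip0 w f := by
  unfold ip0
  simp [mul_comm]

lemma IsSpline.eq_zero {m p : ℕ} (hm : 1 ≤ m) {u : ℝ → ℝ} (hu : IsSpline m p u)
    (h : ip0 u u = 0) : u = 0 := by
  have hm' : (0 : ℝ) < m := by exact_mod_cast hm
  have hc := hu.continuous hm
  have h1 := (setIntegral_eq_zero_iff_of_nonneg_ae
    (Filter.Eventually.of_forall fun x => mul_self_nonneg (u x)) (int1 hc hc)).1 h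
  have h2 := Measure.eqOn_open_of_ae_eq h1 isOpen_Ioo (hc.mul hc).continuousOn continuousOn_const
  have h3 : ∀ x ∈ Ioo (0:ℝ) 1, u x = 0 := fun x hx => mul_self_eq_zero.1 (h2 hx)
  ext x
  obtain ⟨j, hj, hx⟩ := piece_cover m hm x
  obtain ⟨q, -, hq⟩ := hu.2 j hj
  have hj' : (j : ℝ) + 1 ≤ m := by exact_mod_cast hj
  have : q = 0 := by
    refine Polynomial.eq_zero_of_infinite_isRoot q (Set.Infinite.mono (s := Ioo ((j:ℝ)/m) ((j+1)/m)) ?_ ?_)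
    · intro y hy
      have hp : y ∈ pieceSet m j := by
        left
        split_ifs with h0
        · have := hy.2.le
          simpa [h0] using this
        · exact ⟨hy.1.le, hy.2.le⟩
      have : u y = 0 := h3 y ⟨lt_of_le_of_lt (by positivity) hy.1,
        lt_of_lt_of_le hy.2 ((div_le_one hm').2 hj')⟩
      rw [hq y hp] at this
      exact this
    · apply Set.Ioo_infinite
      gcongr
      linarith
  simp [hq x hx, this]

/-- one-dimensional splitting -/
lemma split1 {m p : ℕ} (hm : 1 ≤ m) {u : ℝ → ℝ} (hu : IsSpline m p u) :
    ∃ f : Bool → ℝ → ℝ, (∀ a, IsSplineC m p a (f a)) ∧ u = f true + f false := by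
  have hc : ∀ w : S0 m p hm, Continuous (w : ℝ → ℝ) := fun w => IsSpline.continuous hm w.2.1
  have hcu := hu.continuous hm
  have addr : ∀ f g w : ℝ → ℝ, Continuous f → Continuous g → Continuous w →
      ip0 w (f + g) = ip0 w f + ip0 w g := by
    intro f g w hf hg hw
    rw [ip0_comm, ip0_add hf hg hw, ip0_comm f, ip0_comm g]
  let T : S0 m p hm →ₗ[ℝ] Module.Dual ℝ (S0 m p hm) :=
    LinearMap.mk₂ ℝ (fun a b => ip0 a b)
      (fun a b c => ip0_add (hc a) (hc b) (hc c)) (fun r a b => ip0_smul r a b)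
      (fun a b c => addr _ _ _ (hc b) (hc c) (hc a))
      (fun r a b => by
        show ip0 _ (r • (b : ℝ → ℝ)) = r * _
        rw [ip0_comm, ip0_smul, ip0_comm])
  have hinj : Function.Injective T := by
    rw [← LinearMap.ker_eq_bot, LinearMap.ker_eq_bot']
    intro w hw
    have : ip0 w w = 0 := by
      have := congrArg (fun F => F w) hw
      exact this
    exact Subtype.ext (IsSpline.eq_zero hm w.2.1 this)
  have hsurj := (LinearMap.injective_iff_surjective_of_finrank_eq_finrank
    (Subspace.dual_finrank_eq (K := ℝ) (V := S0 m p hm)).symm).1 hinj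
  let F : Module.Dual ℝ (S0 m p hm) :=
    { toFun := fun b => ip0 u b
      map_add' := fun a b => addr _ _ _ (hc a) (hc b) hcu
      map_smul' := fun r b => by
        show ip0 _ (r • (b : ℝ → ℝ)) = r * _
        rw [ip0_comm, ip0_smul, ip0_comm] }
  obtain ⟨w, hw⟩ := hsurj F
  have hsub : u - (w : ℝ → ℝ) = u + (-1 : ℝ) • (w : ℝ → ℝ) := by simp [sub_eq_add_neg]
  refine ⟨fun a => if a then u - w else w, ?_, ?_⟩
  · rintro (_ | _)
    · exact w.2
    · refine ⟨?_, fun v hv => ?_⟩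
      · simp only [if_true]
        rw [hsub]; exact hu.add (IsSpline.smul _ w.2.1)
      · simp only [if_true]
        rw [hsub, ip0_add hcu ((hc w).const_smul _) (hv.1.continuous hm), ip0_smul]
        have : ip0 w v = ip0 u v := congrArg (fun G => G (⟨v, hv⟩ : S0 m p hm)) hw
        rw [this]; ring
  · simp

lemma IsSplineC.isSpline {m p : ℕ} {a : Bool} {u : ℝ → ℝ} (h : IsSplineC m p a u) :
    IsSpline m p u := by
  cases a
  · exact h.1
  · exact h.1

lemma IsSplineC.orth {m p : ℕ} {a b : Bool} {u v : ℝ → ℝ} (h : IsSplineC m p a u)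
    (h' : IsSplineC m p b v) (hab : a ≠ b) : ip0 u v = 0 := by
  cases a <;> cases b
  · exact absurd rfl hab
  · rw [ip0_comm]; exact h'.2 u h
  · exact h.2 v h'
  · exact absurd rfl hab

lemma IsSpline.diff {m p : ℕ} (hm : 1 ≤ m) {u : ℝ → ℝ} (hu : IsSpline m p u) {x : ℝ}
    (hx : x ∉ knots m) : DifferentiableAt ℝ u x := by
  obtain ⟨j, hj, h⟩ := piece_cover m hm x
  exact (hu.contDiffAt hj (piece_nhds m j hm hj x h hx) 1).differentiableAt (by simp)

lemma IsSpline.deriv_bound {m p : ℕ} (hm : 1 ≤ m) {u : ℝ → ℝ} (hu : IsSpline m p u) :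
    ∃ C, ∀ x ∈ Ioo (0:ℝ) 1, x ∉ knots m → |deriv u x| ≤ C := by
  have : ∀ j : Fin m, ∃ C, ∀ x ∈ Ioo (0:ℝ) 1, x ∉ knots m → x ∈ pieceSet m j →
      |deriv u x| ≤ C := by
    intro j
    obtain ⟨q, -, hq⟩ := hu.2 j j.2
    obtain ⟨C, hC⟩ := (isCompact_Icc (a := (0:ℝ)) (b := 1)).exists_bound_of_continuousOn
      (f := fun x => q.derivative.eval x) (Polynomial.continuous _).continuousOn
    refine ⟨C, fun x hx hk hp => ?_⟩
    have : u =ᶠ[nhds x] fun y => q.eval y := by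
      filter_upwards [piece_nhds m j hm j.2 x hp hk] with y hy using hq y hy
    rw [this.deriv_eq, Polynomial.deriv]
    exact hC x ⟨hx.1.le, hx.2.le⟩
  choose C hC using this
  refine ⟨∑ j, |C j|, fun x hx hk => ?_⟩
  obtain ⟨j, hj, h⟩ := piece_cover m hm x
  refine (hC ⟨j, hj⟩ x hx hk h).trans ((le_abs_self _).trans ?_)
  exact Finset.single_le_sum (f := fun j => |C j|) (fun i _ => abs_nonneg _) (Finset.mem_univ _)

/-- regularity needed of tensor splines -/
def Nice (d m : ℕ) (u : (Fin d → ℝ) → ℝ) : Prop :=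
  Continuous u ∧ ∀ i, (∀ x : Fin d → ℝ, x i ∉ knots m →
      DifferentiableAt ℝ (fun t => u (Function.update x i t)) (x i)) ∧
    ∃ C, ∀ x ∈ cube d, x i ∉ knots m → |pd d i u x| ≤ C

lemma Nice.pd_add {d m : ℕ} {u v : (Fin d → ℝ) → ℝ} (hu : Nice d m u) (hv : Nice d m v)
    (i : Fin d) (x : Fin d → ℝ) (hx : x i ∉ knots m) :
    pd d i (u + v) x = pd d i u x + pd d i v x := by
  unfold pd
  exact deriv_add ((hu.2 i).1 x hx) ((hv.2 i).1 x hx)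

lemma pd_smul {d : ℕ} (c : ℝ) (u : (Fin d → ℝ) → ℝ) (i : Fin d) (x : Fin d → ℝ) :
    pd d i (c • u) x = c * pd d i u x := by
  unfold pd
  exact deriv_const_mul_field (v := fun t => u (Function.update x i t)) c

lemma Nice.add {d m : ℕ} {u v : (Fin d → ℝ) → ℝ} (hu : Nice d m u) (hv : Nice d m v) :
    Nice d m (u + v) := by
  refine ⟨hu.1.add hv.1, fun i => ⟨fun x hx => ((hu.2 i).1 x hx).add ((hv.2 i).1 x hx), ?_⟩⟩
  obtain ⟨C, hC⟩ := (hu.2 i).2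
  obtain ⟨D, hD⟩ := (hv.2 i).2
  refine ⟨C + D, fun x hx hk => ?_⟩
  rw [hu.pd_add hv i x hk]
  exact (abs_add_le _ _).trans (add_le_add (hC x hx hk) (hD x hx hk))

lemma Nice.smul {d m : ℕ} {u : (Fin d → ℝ) → ℝ} (c : ℝ) (hu : Nice d m u) :
    Nice d m (c • u) := by
  refine ⟨hu.1.const_smul c, fun i => ⟨fun x hx => ((hu.2 i).1 x hx).const_smul c, ?_⟩⟩
  obtain ⟨C, hC⟩ := (hu.2 i).2
  refine ⟨|c| * C, fun x hx hk => ?_⟩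
  rw [pd_smul, abs_mul]
  exact mul_le_mul_of_nonneg_left (hC x hx hk) (abs_nonneg _)

lemma Nice.zero {d m : ℕ} : Nice d m 0 := by
  refine ⟨continuous_const, fun i => ⟨fun x hx => differentiableAt_const _, 0, fun x hx hk => ?_⟩⟩
  simp [pd]

lemma Nice.sum {d m : ℕ} {ι : Type*} (s : Finset ι) {u : ι → (Fin d → ℝ) → ℝ}
    (hu : ∀ a, Nice d m (u a)) :
    Nice d m (∑ a ∈ s, u a) ∧ ∀ i, ∀ x : Fin d → ℝ, x i ∉ knots m →
      pd d i (∑ a ∈ s, u a) x = ∑ a ∈ s, pd d i (u a) x := by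
  classical
  induction s using Finset.induction_on with
  | empty => exact ⟨by simpa using Nice.zero, fun i x hx => by simp [pd]⟩
  | insert a s ha ih =>
    rw [Finset.sum_insert ha]
    refine ⟨(hu a).add ih.1, fun i x hx => ?_⟩
    rw [(hu a).pd_add ih.1 i x hx, ih.2 i x hx, Finset.sum_insert ha]

lemma cube_sub (d : ℕ) : cube d ⊆ Icc 0 1 := by
  intro x hx
  exact ⟨fun i => (hx i trivial).1.le, fun i => (hx i trivial).2.le⟩

lemma cube_open (d : ℕ) : IsOpen (cube d) := isOpen_set_pi finite_univ fun _ _ => isOpen_Ioo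

lemma Nice.tensor {d m p : ℕ} (hm : 1 ≤ m) (f : Fin d → ℝ → ℝ) (hf : ∀ i, IsSpline m p (f i)) :
    Nice d m (fun x => ∏ i, f i (x i)) := by
  have hc : ∀ i, Continuous (f i) := fun i => (hf i).continuous hm
  have key : ∀ i (x : Fin d → ℝ) t, ∏ j, f j (Function.update x i t j) =
      f i t * ∏ j ∈ Finset.univ.erase i, f j (x j) := by
    intro i x t
    rw [← Finset.mul_prod_erase _ _ (Finset.mem_univ i)]
    congr 1
    · simp
    · refine Finset.prod_congr rfl fun j hj => ?_
      rw [Function.update_of_ne (Finset.ne_of_mem_erase hj)]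
  refine ⟨continuous_finsetProd _ fun i _ => (hc i).comp (continuous_apply i), fun i => ⟨?_, ?_⟩⟩
  · intro x hx
    simp only [key]
    exact ((hf i).diff hm hx).mul_const _
  · obtain ⟨C, hC⟩ := (hf i).deriv_bound hm
    obtain ⟨D, hD⟩ := (isCompact_Icc (a := (0 : Fin d → ℝ)) (b := 1)).exists_bound_of_continuousOn
      (f := fun x => ∏ j ∈ Finset.univ.erase i, f j (x j))
      (continuous_finsetProd _ fun i _ => (hc i).comp (continuous_apply i)).continuousOn
    refine ⟨C * D, fun x hx hk => ?_⟩
    unfold pd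
    simp only [key]
    rw [deriv_mul_const_field, abs_mul]
    have h1 := hC (x i) (hx i trivial) hk
    exact mul_le_mul h1 (hD x (cube_sub d hx)) (abs_nonneg _) ((abs_nonneg _).trans h1)

lemma nice_of_mem {d m p : ℕ} (hm : 1 ≤ m) {u : (Fin d → ℝ) → ℝ} (hu : u ∈ TensorSpline d m p) :
    Nice d m u := by
  refine Submodule.span_induction ?_ Nice.zero (fun a b _ _ => Nice.add) (fun c a _ => Nice.smul c) hu
  rintro _ ⟨f, hf, rfl⟩
  exact Nice.tensor hm f hf

lemma sub_le (d m p : ℕ) (α : Fin d → Bool) : TensorSplineSub d m p α ≤ TensorSpline d m p := by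
  refine Submodule.span_mono ?_
  rintro _ ⟨f, hf, rfl⟩
  exact ⟨f, fun i => (hf i).isSpline, rfl⟩

lemma intd {d : ℕ} {f g : (Fin d → ℝ) → ℝ} (hf : Continuous f) (hg : Continuous g) :
    IntegrableOn (fun x => f x * g x) (cube d) :=
  ((hf.mul hg).continuousOn.integrableOn_compact isCompact_Icc).mono_set (cube_sub d)

lemma ipd_add {d : ℕ} {f g w : (Fin d → ℝ) → ℝ} (hf : Continuous f) (hg : Continuous g)
    (hw : Continuous w) : ipd d (f + g) w = ipd d f w + ipd d g w := by
  unfold ipd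
  rw [← integral_add (intd hf hw) (intd hg hw)]
  simp [add_mul]

lemma ipd_smul {d : ℕ} (c : ℝ) (f w : (Fin d → ℝ) → ℝ) : ipd d (c • f) w = c * ipd d f w := by
  unfold ipd
  rw [← integral_const_mul]
  simp [mul_assoc]

lemma ipd_comm {d : ℕ} (f w : (Fin d → ℝ) → ℝ) : ipd d f w = ipd d w f := by
  unfold ipd
  simp [mul_comm]

lemma ipd_zero {d : ℕ} (w : (Fin d → ℝ) → ℝ) : ipd d 0 w = 0 := by simp [ipd]

lemma ipd_sum {d : ℕ} {ι : Type*} (s : Finset ι) {u : ι → (Fin d → ℝ) → ℝ}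
    {w : (Fin d → ℝ) → ℝ} (hu : ∀ a, Continuous (u a)) (hw : Continuous w) :
    ipd d (∑ a ∈ s, u a) w = ∑ a ∈ s, ipd d (u a) w := by
  classical
  induction s using Finset.induction_on with
  | empty => simp [ipd_zero]
  | insert a s ha ih =>
    rw [Finset.sum_insert ha, Finset.sum_insert ha, ← ih, ipd_add (hu a) _ hw]
    have := continuous_finset_sum (f := u) s (fun a _ => hu a)
    convert this using 1
    ext x; simp

lemma orth_sub {d m p : ℕ} (hm : 1 ≤ m) {α β : Fin d → Bool} (hab : α ≠ β)
    {u v : (Fin d → ℝ) → ℝ} (hu : u ∈ TensorSplineSub d m p α)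
    (hv : v ∈ TensorSplineSub d m p β) : ipd d u v = 0 := by
  have cont : ∀ α u, u ∈ TensorSplineSub d m p α → Continuous u := fun α u h =>
    (nice_of_mem hm (sub_le d m p α h)).1
  refine Submodule.span_induction (p := fun u _ => ipd d u v = 0) ?_ (ipd_zero v) ?_ ?_ hu
  · rintro _ ⟨f, hf, rfl⟩
    refine Submodule.span_induction (p := fun v _ => ipd d _ v = 0) ?_ ?_ ?_ ?_ hv
    · rintro _ ⟨g, hg, rfl⟩
      obtain ⟨i, hi⟩ := Function.ne_iff.1 hab
      unfold ipd cube
      simp only [← Finset.prod_mul_distrib]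
      rw [volume_pi, Measure.restrict_pi_pi,
        integral_fintype_prod_eq_prod (f := fun i x => f i x * g i x)]
      exact Finset.prod_eq_zero (Finset.mem_univ i) ((hf i).orth (hg i) hi)
    · rw [ipd_comm, ipd_zero]
    · intro a b ha hb h1 h2
      rw [ipd_comm] at h1 h2 ⊢
      rw [ipd_add (cont β a ha) (cont β b hb) (cont α _ (Submodule.subset_span ⟨f, hf, rfl⟩)),
        h1, h2, add_zero]
    · intro c a ha h
      rw [ipd_comm] at h ⊢
      rw [ipd_smul, h, mul_zero]
  · intro a b ha hb h1 h2
    rw [ipd_add (cont α a ha) (cont α b hb) (cont β v hv), h1, h2, add_zero]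
  · intro c a ha h
    rw [ipd_smul, h, mul_zero]

lemma splitd {d m p : ℕ} (hm : 1 ≤ m) {v : (Fin d → ℝ) → ℝ} (hv : v ∈ TensorSpline d m p) :
    ∃ w : (Fin d → Bool) → (Fin d → ℝ) → ℝ, (∀ α, w α ∈ TensorSplineSub d m p α) ∧
      v = ∑ α, w α := by
  refine Submodule.span_induction (p := fun v _ => ∃ w : (Fin d → Bool) → (Fin d → ℝ) → ℝ,
    (∀ α, w α ∈ TensorSplineSub d m p α) ∧ v = ∑ α, w α) ?_ ?_ ?_ ?_ hv
  · rintro _ ⟨f, hf, rfl⟩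
    choose g hg hfg using fun i => split1 hm (hf i)
    refine ⟨fun α x => ∏ i, g i (α i) (x i), fun α => ?_, ?_⟩
    · exact Submodule.subset_span ⟨fun i => g i (α i), fun i => hg i _, rfl⟩
    · ext x
      have := Finset.prod_univ_sum (fun _ : Fin d => (Finset.univ : Finset Bool))
        (fun i a => g i a (x i))
      simp only [Fintype.piFinset_univ] at this
      rw [Finset.sum_apply, ← this]
      refine Finset.prod_congr rfl fun i _ => ?_
      conv_lhs => rw [hfg i]
      simp
  · exact ⟨0, fun α => Submodule.zero_mem _, by simp⟩
  · rintro a b _ _ ⟨w, hw, rfl⟩ ⟨w', hw', rfl⟩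
    exact ⟨w + w', fun α => Submodule.add_mem _ (hw α) (hw' α), by simp [Finset.sum_add_distrib]⟩
  · rintro c a _ ⟨w, hw, rfl⟩
    exact ⟨c • w, fun α => Submodule.smul_mem _ c (hw α), by simp [Finset.smul_sum]⟩

lemma ae_off (d m : ℕ) : ∀ᵐ x : Fin d → ℝ, ∀ i, x i ∉ knots m := by
  rw [ae_all_iff]
  intro i
  have : volume (knots m) = 0 := (knots_finite m).measure_zero _
  have h := Measure.pi_eval_preimage_null (fun _ : Fin d => (volume : Measure ℝ)) (i := i) this
  rw [ae_iff]
  simp only [not_not, volume_pi]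
  exact h

lemma Nice.integrable {d m : ℕ} {u : (Fin d → ℝ) → ℝ} (hu : Nice d m u) :
    IntegrableOn (fun x => (∑ i, pd d i u x * pd d i u x) + u x * u x) (cube d) := by
  refine Integrable.add ?_ (intd hu.1 hu.1)
  refine integrable_finset_sum _ fun i _ => ?_
  have hmeas : Measurable (pd d i u) := by
    have h := measurable_deriv_with_param (𝕜 := ℝ)
      (f := fun (x : Fin d → ℝ) (t : ℝ) => u (Function.update x i t)) (by
        show Continuous fun q : (Fin d → ℝ) × ℝ => u (Function.update q.1 i q.2)
        exact hu.1.comp (continuous_fst.update i continuous_snd))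
    exact h.comp (measurable_id.prodMk (measurable_pi_apply i))
  obtain ⟨C, hC⟩ := (hu.2 i).2
  refine Measure.integrableOn_of_bounded (M := C * C) ?_ (hmeas.mul hmeas).aestronglyMeasurable ?_
  · exact ((measure_mono (cube_sub d)).trans_lt isCompact_Icc.measure_lt_top).ne
  · filter_upwards [ae_restrict_of_ae (ae_off d m), ae_restrict_mem (cube_open d).measurableSet]
      with x hx hxc
    have := hC x hxc (hx i)
    rw [Real.norm_eq_abs, abs_mul]
    exact mul_le_mul this this (abs_nonneg _) ((abs_nonneg _).trans this)

lemma pd_congr {d : ℕ} {u v : (Fin d → ℝ) → ℝ} (h : EqOn u v (cube d)) (i : Fin d)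
    {x : Fin d → ℝ} (hx : x ∈ cube d) : pd d i u x = pd d i v x := by
  unfold pd
  apply Filter.EventuallyEq.deriv_eq
  have hc : ContinuousAt (fun t => Function.update x i t) (x i) :=
    (continuous_const.update i continuous_id).continuousAt
  have := hc.preimage_mem_nhds (t := cube d) (by
    rw [Function.update_eq_self]; exact (cube_open d).mem_nhds hx)
  filter_upwards [this] with t ht using h ht

lemma aForm_congr {d : ℕ} {u v : (Fin d → ℝ) → ℝ} (h : EqOn u v (cube d)) :
    aForm d u u = aForm d v v := by
  unfold aForm
  refine setIntegral_congr_fun (cube_open d).measurableSet fun x hx => ?_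
  simp only [h hx, pd_congr h _ hx]

lemma aForm_sum_le {d m : ℕ} {u : (Fin d → Bool) → (Fin d → ℝ) → ℝ} (hu : ∀ α, Nice d m (u α)) :
    aForm d (∑ α, u α) (∑ α, u α) ≤ 2 ^ d * ∑ α, aForm d (u α) (u α) := by
  have hcs : ∀ g : (Fin d → Bool) → ℝ, (∑ α, g α) * (∑ α, g α) ≤ 2 ^ d * ∑ α, g α * g α := by
    intro g
    have := sq_sum_le_card_mul_sum_sq (s := Finset.univ) (f := g)
    simpa [sq] using this
  unfold aForm
  rw [← integral_finset_sum _ (fun α _ => (hu α).integrable), ← integral_const_mul]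
  refine integral_mono_of_nonneg ?_ ?_ ?_
  · refine Filter.Eventually.of_forall fun x => ?_
    exact add_nonneg (Finset.sum_nonneg fun i _ => mul_self_nonneg _) (mul_self_nonneg _)
  · exact (integrable_finset_sum _ (fun α _ => (hu α).integrable)).const_mul _
  · filter_upwards [ae_restrict_of_ae (ae_off d m)] with x hx
    rw [Finset.sum_add_distrib, Finset.sum_comm, mul_add, Finset.mul_sum]
    refine add_le_add (Finset.sum_le_sum fun i _ => ?_) ?_
    · rw [(Nice.sum Finset.univ hu).2 i x (hx i)]
      exact hcs _
    · rw [Finset.sum_apply]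
      exact hcs _

lemma proj_eq {d m p : ℕ} (hm : 1 ≤ m) {v : (Fin d → ℝ) → ℝ} (hv : v ∈ TensorSpline d m p)
    {vα : (Fin d → Bool) → (Fin d → ℝ) → ℝ} (h : ∀ α, IsL2ProjSub d m p α v (vα α)) :
    EqOn v (∑ α, vα α) (cube d) := by
  obtain ⟨w, hw, rfl⟩ := splitd hm hv
  have cont : ∀ α u, u ∈ TensorSplineSub d m p α → Continuous u := fun α u h =>
    (nice_of_mem hm (sub_le d m p α h)).1
  have key : ∀ α, EqOn (w α) (vα α) (cube d) := by
    intro α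
    have he : w α - vα α ∈ TensorSplineSub d m p α := Submodule.sub_mem _ (hw α) (h α).1
    have hec := cont α _ he
    have hz : ipd d (w α - vα α) (w α - vα α) = 0 := by
      have h1 := (h α).2 _ he
      have h2 : (∑ β, w β) - vα α = (w α - vα α) + ∑ β ∈ Finset.univ.erase α, w β := by
        rw [← Finset.add_sum_erase _ _ (Finset.mem_univ α)]; abel
      have hs : Continuous (∑ β ∈ Finset.univ.erase α, w β) :=
        (Nice.sum (m := m) (Finset.univ.erase α)
          (fun β => nice_of_mem hm (sub_le d m p β (hw β)))).1.1
      rw [h2, ipd_add hec hs hec, ipd_sum _ (fun β => cont β _ (hw β)) hec,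
        Finset.sum_eq_zero (fun β hβ => orth_sub hm (Finset.ne_of_mem_erase hβ) (hw β) he),
        add_zero] at h1
      exact h1
    have h1 := (setIntegral_eq_zero_iff_of_nonneg_ae
      (Filter.Eventually.of_forall fun x => mul_self_nonneg ((w α - vα α) x)) (intd hec hec)).1 hz
    have h2 := Measure.eqOn_open_of_ae_eq h1 (cube_open d) (hec.mul hec).continuousOn
      continuousOn_const
    intro x hx
    have := mul_self_eq_zero.1 (h2 hx)
    simpa [sub_eq_zero] using this
  intro x hx
  simp only [Finset.sum_apply]
  exact Finset.sum_congr rfl fun α _ => key α hx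

/-- Lemma `lem:smoothing-prop`: if for every `α ∈ {0,1}^d` the
local smoother `L_α` (given here through its bilinear form `b α` on `S_α`, symmetric
and positive definite) satisfies `a(v_α, v_α) ≤ c₁·⟨L_α v_α, v_α⟩` for all
`v_α ∈ S_α`, then the additive subspace correction smoother `L = Σ_α Q_α′ L_α Q_α`
satisfies `a(v,v) ≤ c·⟨Lv,v⟩ = c·Σ_α ⟨L_α Q_α v, Q_α v⟩` for all `v ∈ S^d`, where
`c` depends only on `c₁` and `d`, not on `h` or `p`. -/
theorem smoothing_property_subspace_correction :
    ∀ d : ℕ, 1 ≤ d → ∀ c₁ : ℝ, 0 < c₁ → ∃ c : ℝ, 0 < c ∧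
      ∀ m p : ℕ, 1 ≤ m → 1 ≤ p →
      ∀ b : (Fin d → Bool) → ((Fin d → ℝ) → ℝ) → ((Fin d → ℝ) → ℝ) → ℝ,
        (∀ α, ∀ u ∈ TensorSplineSub d m p α, ∀ v ∈ TensorSplineSub d m p α,
          b α u v = b α v u) →
        (∀ α, ∀ u ∈ TensorSplineSub d m p α, l2normSqD d u ≠ 0 → 0 < b α u u) →
        (∀ α, ∀ u ∈ TensorSplineSub d m p α, aForm d u u ≤ c₁ * b α u u) →
        ∀ v : (Fin d → ℝ) → ℝ, v ∈ TensorSpline d m p →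
        ∀ vα : (Fin d → Bool) → (Fin d → ℝ) → ℝ,
          (∀ α, IsL2ProjSub d m p α v (vα α)) →
          aForm d v v ≤ c * ∑ α : Fin d → Bool, b α (vα α) (vα α) := by
  intro d _ c₁ hc₁
  refine ⟨2 ^ d * c₁, by positivity, ?_⟩
  intro m p hm _ b _ _ hb v hv vα h
  rw [aForm_congr (proj_eq hm hv h)]
  refine (aForm_sum_le (m := m)
    (fun α => nice_of_mem hm (sub_le d m p α (h α).1))).trans ?_
  rw [mul_assoc]
  refine mul_le_mul_of_nonneg_left ?_ (by positivity)
  rw [Finset.mul_sum]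
  exact Finset.sum_le_sum fun α _ => hb α _ (h α).1

end SplineMG
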